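/- Let R be a (possibly noncommutative) unital ring, P ∈ R, and S a left R-module. Then there is an isomorphism of abelian groups Ext¹_R(M_P, S) ≅ {g ∈ S : Q • g = 0 for all Q ∈ N_P} ⧸ {P • f : f ∈ S}, where M_P = R ⧸ R·P. That is, Ext¹ classifies elements of S satisfying the algebraic compatibility conditions of the inhomogeneous equation Pf = g, modulo those g for which the equation Pf = g is truly solvable in S. (Note that P • f satisfies the compatibility conditions for every f ∈ S, since Q(Pf) = (QP)f = 0 for Q ∈ N_P.) -/

import Mathlib

/-!
The presentation `R ⟶ R ⟶ R ⧸ R·P ⟶ 0`, whose first map is right multiplication by `P`, extends to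
a projective resolution. A morphism `φ : R ⟶ S` is a `1`-cocycle exactly when it vanishes on the
kernel `N_P` of right multiplication by `P`, since the next term of the resolution surjects onto
`N_P`; it is a coboundary exactly when it is right multiplication by `P` followed by a morphism
`R ⟶ S`. Under `φ ↦ φ 1` these conditions become `N_P • φ 1 = 0` and `φ 1 ∈ P • S`, because
`φ Q = Q • φ 1`.
-/

open CategoryTheory Opposite

/-- The subgroup `{g ∈ S | Q • g = 0 for all Q with Q * P = 0}` of elements of
`S` satisfying the algebraic compatibility conditions of the inhomogeneous
equation `P f = g`. -/
def compatSpace (R : Type*) [Ring R] (P : R) (S : Type*) [AddCommGroup S]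
    [Module R S] : AddSubgroup S where
  carrier := {g : S | ∀ Q : R, Q * P = 0 → Q • g = 0}
  add_mem' := by
    intro a b ha hb Q hQ
    rw [smul_add, ha Q hQ, hb Q hQ, add_zero]
  zero_mem' := by intro Q _; simp
  neg_mem' := by
    intro a ha Q hQ
    rw [smul_neg, ha Q hQ, neg_zero]

/-- A linear equivalence induces equivalences between corresponding subquotients. Here and below the
subquotient "`A` modulo `B`" is `A ⧸ B.submoduleOf A`, that is `A ⧸ A ⊓ B`. -/
def subquotientCongr {k M N : Type*} [Ring k] [AddCommGroup M] [Module k M] [AddCommGroup N]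
    [Module k N] (e : M ≃ₗ[k] N) {A B : Submodule k M} {A' B' : Submodule k N}
    (hA : ∀ x, x ∈ A ↔ e x ∈ A') (hB : ∀ x, x ∈ B ↔ e x ∈ B') :
    (A ⧸ B.submoduleOf A) ≃ₗ[k] A' ⧸ B'.submoduleOf A' :=
  have map_A : A.map (e : M →ₗ[k] N) = A' := by
    ext y
    rw [Submodule.mem_map_equiv, hA, e.apply_symm_apply]
  Submodule.Quotient.equiv _ _ (e.ofSubmodules A A' map_A) <| by
    ext y
    rw [Submodule.mem_map_equiv]
    simp only [Submodule.submoduleOf, Submodule.mem_comap, Submodule.subtype_apply, hB]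
    simp

/-- The homology of a short complex of modules as a subquotient of its middle term. -/
noncomputable def homologyLinearEquivSubquotient {k : Type*} [Ring k]
    (T : ShortComplex (ModuleCat k)) :
    T.homology ≃ₗ[k]
      LinearMap.ker T.g.hom ⧸ (LinearMap.range T.f.hom).submoduleOf (LinearMap.ker T.g.hom) :=
  T.moduleCatHomologyIso.toLinearEquiv ≪≫ₗ
    Submodule.quotEquivOfEq _ _ (LinearMap.range_codRestrict _ _ _)

section SyzygyComplex

open Limits

variable {C : Type*} [Category* C] [Abelian C] [EnoughProjectives C]

lemma syzygies_d_comp {X₁ X₀ : C} (d : X₁ ⟶ X₀) : Projective.d d ≫ d = 0 :=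
  calc (Projective.π (kernel d) ≫ kernel.ι d) ≫ d
    _ = Projective.π (kernel d) ≫ kernel.ι d ≫ d := Category.assoc ..
    _ = 0 := by rw [kernel.condition, comp_zero]

/-- A morphism `d : X₁ ⟶ X₀`, prolonged to the left by iterated projective syzygies. -/
noncomputable def syzygyComplex {X₁ X₀ : C} (d : X₁ ⟶ X₀) : ChainComplex C ℕ :=
  ChainComplex.mk' X₀ X₁ d fun f => ⟨Projective.syzygies f, Projective.d f, syzygies_d_comp f⟩

namespace syzygyComplex

variable {X₁ X₀ : C} (d : X₁ ⟶ X₀)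

lemma d_one_zero : (syzygyComplex d).d 1 0 = d :=
  ChainComplex.mk'_d_1_0 ..

/-- The terms of `syzygyComplex d` in degrees at least two are the projective syzygies of its
differentials. -/
noncomputable def xIso (n : ℕ) :
    (syzygyComplex d).X (n + 2) ≅ Projective.syzygies ((syzygyComplex d).d (n + 1) n) :=
  ChainComplex.mk'XIso X₀ X₁ d _ n

lemma d_succ_succ (n : ℕ) :
    (syzygyComplex d).d (n + 2) (n + 1) =
      (xIso d n).hom ≫ Projective.d ((syzygyComplex d).d (n + 1) n) :=
  ChainComplex.mk'_d X₀ X₁ d _ n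

lemma exactAt_succ (n : ℕ) : (syzygyComplex d).ExactAt (n + 1) := by
  let K := syzygyComplex d
  let e : ShortComplex.mk (K.d (n + 2) (n + 1)) (K.d (n + 1) n) (K.d_comp_d _ _ _) ≅
      ShortComplex.mk (Projective.d (K.d (n + 1) n)) (K.d (n + 1) n) (syzygies_d_comp _) :=
    ShortComplex.isoMk (xIso d n) (Iso.refl _) (Iso.refl _) (by simp [K, d_succ_succ]) (by simp)
  rw [HomologicalComplex.exactAt_iff' _ (n + 2) (n + 1) n (by simp) (by simp)]
  exact (ShortComplex.exact_iff_of_iso e).2 (exact_d_f _)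

lemma projective_X [Projective X₁] [Projective X₀] (n : ℕ) :
    Projective ((syzygyComplex d).X n) := by
  match n with
  | 0 | 1 => assumption
  | n + 2 => exact Projective.of_iso (xIso d n).symm (Projective.projective_over _)

end syzygyComplex

/-- The projective resolution of `T.X₃` extending a projective presentation
`T.X₁ ⟶ T.X₂ ⟶ T.X₃ ⟶ 0` by iterated projective syzygies. -/
noncomputable def presentationResolution (T : ShortComplex C) (hT : T.Exact) [Epi T.g]
    [Projective T.X₁] [Projective T.X₂] : ProjectiveResolution T.X₃ where
  complex := syzygyComplex T.f
  projective := syzygyComplex.projective_X T.f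
  π := (ChainComplex.toSingle₀Equiv _ _).symm
    ⟨T.g, by rw [syzygyComplex.d_one_zero]; exact T.zero⟩
  quasiIso := ⟨fun n => by
    cases n with
    | zero =>
      rw [ChainComplex.quasiIsoAt₀_iff, ShortComplex.quasiIso_iff_of_zeros' _ rfl rfl rfl]
      refine (ShortComplex.exact_and_epi_g_iff_of_iso ?_).2 ⟨hT, inferInstance⟩
      refine ShortComplex.isoMk (Iso.refl _) (Iso.refl _) (Iso.refl _) ?_ ?_
      · exact (Category.id_comp T.f).trans
          ((syzygyComplex.d_one_zero T.f).symm.trans (Category.comp_id _).symm)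
      · have π_f_zero := ChainComplex.toSingle₀Equiv_symm_apply_f_zero (C := syzygyComplex T.f) T.g
        exact (Category.id_comp T.g).trans ((π_f_zero _).symm.trans (Category.comp_id _).symm)
    | succ n =>
      rw [quasiIsoAt_iff_exactAt' _ _ (ChainComplex.exactAt_succ_single_obj _ n)]
      exact syzygyComplex.exactAt_succ T.f n⟩

end SyzygyComplex

section Ext

open Limits

variable {C : Type*} [Category* C] [Abelian C]

lemma exact_comp_eq_zero_iff {T : ShortComplex C} (hT : T.Exact) {Y : C} (φ : T.X₂ ⟶ Y) :
    T.f ≫ φ = 0 ↔ kernel.ι T.g ≫ φ = 0 := by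
  have := hT.epi_kernelLift
  conv_lhs => rw [← kernel.lift_ι T.g T.f T.zero, Category.assoc]
  exact ⟨zero_of_epi_comp _, fun h => by rw [h, comp_zero]⟩

variable (k : Type*) [Ring k] [Linear k C] {X₁ X₀ : C}

/-- The morphisms `φ : X₁ ⟶ Y` vanishing on the kernel of `f : X₁ ⟶ X₀`, which is the compatibility
condition for the equation `f ≫ ψ = φ` in the unknown `ψ : X₀ ⟶ Y`. -/
noncomputable def compatHom (f : X₁ ⟶ X₀) (Y : C) : Submodule k (X₁ ⟶ Y) :=
  LinearMap.ker (Linear.leftComp k Y (kernel.ι f))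

/-- The morphisms `φ : X₁ ⟶ Y` for which the equation `f ≫ ψ = φ` has a solution `ψ : X₀ ⟶ Y`. -/
def solvableHom (f : X₁ ⟶ X₀) (Y : C) : Submodule k (X₁ ⟶ Y) :=
  LinearMap.range (Linear.leftComp k Y f)

variable [EnoughProjectives C]

/-- `Extⁿ⁺¹(Z, Y)` computed from a projective resolution `P` of `Z`: the cocycles are the morphisms
`P_{n+1} ⟶ Y` compatible with the differential `P_{n+1} ⟶ P_n`, the coboundaries the
solvable ones. -/
noncomputable def extSuccLinearEquiv {Z : C} (P : ProjectiveResolution Z) (n : ℕ) (Y : C) :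
    ((Ext k C (n + 1)).obj (op Z)).obj Y ≃ₗ[k]
      compatHom k (P.complex.d (n + 1) n) Y ⧸
        (solvableHom k (P.complex.d (n + 1) n) Y).submoduleOf
          (compatHom k (P.complex.d (n + 1) n) Y) :=
  let L := P.complex.linearYonedaObj k Y
  let L' := L.sc' n (n + 1) (n + 2)
  let eHomology : L.homology (n + 1) ≅ L'.homology :=
    ShortComplex.homologyMapIso (L.isoSc' n (n + 1) (n + 2) (by simp) (by simp))
  (P.isoExt (n + 1) Y ≪≫ eHomology).toLinearEquiv ≪≫ₗ homologyLinearEquivSubquotient L' ≪≫ₗ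
    subquotientCongr (LinearEquiv.refl k (P.complex.X (n + 1) ⟶ Y))
      (exact_comp_eq_zero_iff (P.exact_succ n)) (fun _ => Iff.rfl)

/-- `Ext¹(T.X₃, Y)` computed from a projective presentation `T.X₁ ⟶ T.X₂ ⟶ T.X₃ ⟶ 0`. -/
noncomputable def extOneLinearEquiv (T : ShortComplex C) (hT : T.Exact) [Epi T.g]
    [Projective T.X₁] [Projective T.X₂] (Y : C) :
    ((Ext k C 1).obj (op T.X₃)).obj Y ≃ₗ[k]
      compatHom k T.f Y ⧸ (solvableHom k T.f Y).submoduleOf (compatHom k T.f Y) :=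
  have d_eq : (presentationResolution T hT).complex.d 1 0 = T.f := syzygyComplex.d_one_zero T.f
  extSuccLinearEquiv k (presentationResolution T hT) 0 Y ≪≫ₗ
    subquotientCongr (LinearEquiv.refl k (T.X₁ ⟶ Y))
      (SetLike.ext_iff.1 (congrArg (compatHom k · Y) d_eq))
      (SetLike.ext_iff.1 (congrArg (solvableHom k · Y) d_eq))

end Ext

lemma kernel_ι_comp_eq_zero_iff {R : Type u} [Ring R] {M N Y : ModuleCat.{v} R} (f : M ⟶ N)
    (φ : M ⟶ Y) : Limits.kernel.ι f ≫ φ = 0 ↔ ∀ x, f x = 0 → φ x = 0 := by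
  constructor
  · intro h x hx
    obtain ⟨y, rfl⟩ := (ShortComplex.moduleCat_exact_iff _).1 (ShortComplex.exact_kernel f) x hx
    exact congr($h y)
  · intro h
    ext y
    exact h _ congr($(Limits.kernel.condition f) y)

section Cyclic

variable {R : Type u} [Ring R] (P : R) {S : ModuleCat.{u} R}

/-- Right multiplication `Q ↦ Q * P`, as an endomorphism of the left module `R`. -/
def rightMul : ModuleCat.of R R ⟶ ModuleCat.of R R :=
  ModuleCat.ofHom (LinearMap.toSpanSingleton R R P)

lemma rightMul_apply (Q : R) : rightMul P Q = Q * P := rfl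

/-- The presentation `R ⟶ R ⟶ R ⧸ R·P ⟶ 0`, whose first map is right multiplication by `P`. -/
def cyclicPresentation : ShortComplex (ModuleCat.{u} R) :=
  ShortComplex.mk (rightMul P) (ModuleCat.ofHom (Submodule.span R {P}).mkQ) <| by
    ext
    simp [rightMul, Submodule.mem_span_singleton_self]

namespace cyclicPresentation

lemma exact : (cyclicPresentation P).Exact := by
  rw [ShortComplex.moduleCat_exact_iff_range_eq_ker]
  exact (LinearMap.range_toSpanSingleton P).trans (Submodule.ker_mkQ _).symm

instance : Epi (cyclicPresentation P).g :=
  (ModuleCat.epi_iff_surjective _).2 (Submodule.mkQ_surjective _)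

instance : Projective (cyclicPresentation P).X₁ :=
  inferInstanceAs (Projective (ModuleCat.of R R))

instance : Projective (cyclicPresentation P).X₂ :=
  inferInstanceAs (Projective (ModuleCat.of R R))

end cyclicPresentation

/-- Morphisms `R ⟶ S` correspond to elements of `S` by evaluation at `1`. -/
def evalOne : (ModuleCat.of R R ⟶ S) ≃ₗ[ℤ] S :=
  (ModuleCat.homAddEquiv.trans (LinearMap.ringLmapEquivSelf R ℕ S).toAddEquiv).toIntLinearEquiv

lemma hom_apply_eq_smul_evalOne (φ : ModuleCat.of R R ⟶ S) (Q : R) : φ Q = Q • evalOne φ := by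
  change φ Q = Q • φ (1 : R)
  rw [← map_smul, smul_eq_mul, mul_one]

lemma evalOne_rightMul_comp (ψ : ModuleCat.of R R ⟶ S) :
    evalOne (rightMul P ≫ ψ) = P • evalOne ψ := by
  change ψ (rightMul P (1 : R)) = _
  rw [rightMul_apply, one_mul, hom_apply_eq_smul_evalOne]

lemma mem_compatHom_rightMul_iff (φ : ModuleCat.of R R ⟶ S) :
    φ ∈ compatHom ℤ (rightMul P) S ↔ evalOne φ ∈ compatSpace R P S := by
  refine (kernel_ι_comp_eq_zero_iff (rightMul P) φ).trans (forall_congr' fun Q => ?_)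
  rw [rightMul_apply, hom_apply_eq_smul_evalOne]

lemma mem_solvableHom_rightMul_iff (φ : ModuleCat.of R R ⟶ S) :
    φ ∈ solvableHom ℤ (rightMul P) S ↔ evalOne φ ∈ (DistribSMul.toAddMonoidHom S P).range := by
  refine evalOne.toEquiv.exists_congr fun ψ => ?_
  rw [← evalOne.injective.eq_iff, Linear.leftComp_apply, evalOne_rightMul_comp]
  rfl

end Cyclic

/-- `Ext¹_R(M_P, S)` (with `M_P = R ⧸ R·P`) is isomorphic, as an abelian group,
to the group of elements of `S` satisfying the algebraic compatibility
conditions of the inhomogeneous equation `P f = g`, modulo the subgroup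
`{P • f : f ∈ S}` of right-hand sides `g` for which the equation is truly
solvable in `S`. -/
theorem ext_one_iso_compat_mod_solvable
    (R : Type u) [Ring R] (P : R) (S : Type u) [AddCommGroup S] [Module R S] :
    Nonempty
      ((((Ext ℤ (ModuleCat.{u} R) 1).obj
          (op (ModuleCat.of R (R ⧸ Submodule.span R ({P} : Set R))))).obj
            (ModuleCat.of R S)) ≃+
        (compatSpace R P S ⧸
          ((DistribMulAction.toAddMonoidHom S P).range.addSubgroupOf
            (compatSpace R P S)))) := by
  let M := ModuleCat.of R S
  let extEquiv := extOneLinearEquiv ℤ (cyclicPresentation P) (cyclicPresentation.exact P) M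
  let evalEquiv := subquotientCongr evalOne
    (A' := (compatSpace R P M).toIntSubmodule)
    (B' := (DistribSMul.toAddMonoidHom M P).range.toIntSubmodule)
    (mem_compatHom_rightMul_iff P) (mem_solvableHom_rightMul_iff P)
  -- Subquotients of ℤ-submodules are definitionally those of the underlying subgroups.
  exact ⟨(extEquiv ≪≫ₗ evalEquiv).toAddEquiv⟩
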